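/- Every alternating 3-tensor χ on ℝ^7 decomposes uniquely as χ = f φ + α ⌟ ψ + i_φ(h), i.e. χ_{abc} = f φ_{abc} + α^{d} ψ_{dabc} + (1/3)( h_{a}{}^{d} φ_{dbc} + h_{b}{}^{d} φ_{adc} + h_{c}{}^{d} φ_{abd} ), where f ∈ ℝ, α ∈ ℝ^7, and h is a traceless symmetric 2-tensor on ℝ^7. Consequently Λ³(ℝ^7) = Λ³₁ ⊕ Λ³₇ ⊕ Λ³₂₇, a direct sum of subspaces of dimensions 1, 7, and 27 respectively. -/

import Mathlib

open scoped BigOperators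

/-- Components of the standard G₂ 3-form `φ` on the seven ordered (0-indexed) index
triples corresponding to `φ₁₂₃ = φ₁₄₅ = φ₁₆₇ = φ₂₄₆ = 1`, `φ₂₅₇ = φ₃₄₇ = φ₃₅₆ = -1`. -/
def phi0 : ℕ → ℕ → ℕ → ℝ
  | 0, 1, 2 => 1
  | 0, 3, 4 => 1
  | 0, 5, 6 => 1
  | 1, 3, 5 => 1
  | 1, 4, 6 => -1
  | 2, 3, 6 => -1
  | 2, 4, 5 => -1
  | _, _, _ => 0

/-- The standard G₂ 3-form `φ` on `ℝ⁷`, as a totally antisymmetric 3-tensor. -/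
def phi (a b c : Fin 7) : ℝ :=
  phi0 a.val b.val c.val - phi0 a.val c.val b.val + phi0 b.val c.val a.val
    - phi0 b.val a.val c.val + phi0 c.val a.val b.val - phi0 c.val b.val a.val

/-- The Levi-Civita symbol on seven indices, with `ε 1234567 = 1`. -/
noncomputable def eps (v : Fin 7 → Fin 7) : ℝ :=
  if h : Function.Bijective v then ((Equiv.Perm.sign (Equiv.ofBijective v h) : ℤ) : ℝ) else 0

/-- The 4-form `ψ = ⋆φ`, `ψ_{abcd} = (1/6) ε_{abcdmnp} φ^{mnp}`. -/
noncomputable def psi (a b c d : Fin 7) : ℝ :=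
  (1 / 6 : ℝ) * ∑ m : Fin 7, ∑ n : Fin 7, ∑ p : Fin 7,
    eps ![a, b, c, d, m, n, p] * phi m n p

/-- The Euclidean metric `g_{ab} = δ_{ab}` on `ℝ⁷`. -/
def gE (a b : Fin 7) : ℝ := if a = b then 1 else 0

/-- `i_φ(h)_{abc} = (1/3)(h_a{}^d φ_{dbc} + h_b{}^d φ_{adc} + h_c{}^d φ_{abd})`. -/
noncomputable def iphi (h : Matrix (Fin 7) (Fin 7) ℝ) (a b c : Fin 7) : ℝ :=
  (1 / 3 : ℝ) * ∑ d : Fin 7, (h a d * phi d b c + h b d * phi a d c + h c d * phi a b d)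

/-- The space `Λ³(ℝ⁷)` of alternating 3-tensors on `ℝ⁷`. -/
def Lam3 : Submodule ℝ (Fin 7 → Fin 7 → Fin 7 → ℝ) where
  carrier := {χ | (∀ a b c, χ b a c = -χ a b c) ∧ (∀ a b c, χ a c b = -χ a b c)}
  add_mem' := by
    rintro x y ⟨hx1, hx2⟩ ⟨hy1, hy2⟩
    exact ⟨fun a b c => by simp only [Pi.add_apply, hx1 a b c, hy1 a b c]; ring,
      fun a b c => by simp only [Pi.add_apply, hx2 a b c, hy2 a b c]; ring⟩
  zero_mem' := ⟨fun a b c => by simp, fun a b c => by simp⟩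
  smul_mem' := by
    rintro r x ⟨hx1, hx2⟩
    exact ⟨fun a b c => by simp only [Pi.smul_apply, hx1 a b c, smul_eq_mul]; ring,
      fun a b c => by simp only [Pi.smul_apply, hx2 a b c, smul_eq_mul]; ring⟩

/-- The 1-dimensional component `Λ³₁ = ℝ·φ`. -/
def Lam3_1 : Submodule ℝ (Fin 7 → Fin 7 → Fin 7 → ℝ) where
  carrier := {χ | ∃ f : ℝ, ∀ a b c, χ a b c = f * phi a b c}
  add_mem' := by
    rintro x y ⟨f, hf⟩ ⟨g, hg⟩
    exact ⟨f + g, fun a b c => by simp only [Pi.add_apply, hf a b c, hg a b c]; ring⟩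
  zero_mem' := ⟨0, fun a b c => by simp⟩
  smul_mem' := by
    rintro r x ⟨f, hf⟩
    exact ⟨r * f, fun a b c => by simp only [Pi.smul_apply, hf a b c, smul_eq_mul]; ring⟩

/-- The 7-dimensional component `Λ³₇ = {α ⌟ ψ : α ∈ ℝ⁷}`. -/
noncomputable def Lam3_7 : Submodule ℝ (Fin 7 → Fin 7 → Fin 7 → ℝ) where
  carrier := {χ | ∃ α : Fin 7 → ℝ, ∀ a b c, χ a b c = ∑ d : Fin 7, α d * psi d a b c}
  add_mem' := by
    rintro x y ⟨α, hα⟩ ⟨β, hβ⟩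
    refine ⟨α + β, fun a b c => ?_⟩
    simp only [Pi.add_apply, hα a b c, hβ a b c, add_mul, Finset.sum_add_distrib]
  zero_mem' := ⟨0, fun a b c => by simp⟩
  smul_mem' := by
    rintro r x ⟨α, hα⟩
    refine ⟨r • α, fun a b c => ?_⟩
    simp only [Pi.smul_apply, hα a b c, smul_eq_mul, Finset.mul_sum]
    exact Finset.sum_congr rfl fun d _ => by ring

/-- The 27-dimensional component
`Λ³₂₇ = {i_φ(h) : h symmetric traceless}`. -/
noncomputable def Lam3_27 : Submodule ℝ (Fin 7 → Fin 7 → Fin 7 → ℝ) where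
  carrier := {χ | ∃ h : Matrix (Fin 7) (Fin 7) ℝ, (∀ a b, h a b = h b a) ∧
    (∑ a : Fin 7, h a a = 0) ∧ ∀ a b c, χ a b c = iphi h a b c}
  add_mem' := by
    rintro x y ⟨h, hsym, htr, hx⟩ ⟨k, ksym, ktr, hy⟩
    refine ⟨h + k, fun a b => ?_, ?_, fun a b c => ?_⟩
    · simp only [Matrix.add_apply, hsym a b, ksym a b]
    · simp only [Matrix.add_apply, Finset.sum_add_distrib, htr, ktr, add_zero]
    · simp only [Pi.add_apply, hx a b c, hy a b c, iphi, Matrix.add_apply]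
      rw [← mul_add, ← Finset.sum_add_distrib]
      congr 1
      exact Finset.sum_congr rfl fun d _ => by ring
  zero_mem' := by
    refine ⟨0, fun a b => by simp, by simp, fun a b c => ?_⟩
    simp [iphi]
  smul_mem' := by
    rintro r x ⟨h, hsym, htr, hx⟩
    refine ⟨r • h, fun a b => ?_, ?_, fun a b c => ?_⟩
    · simp only [Matrix.smul_apply, hsym a b]
    · simp only [Matrix.smul_apply, smul_eq_mul, ← Finset.mul_sum, htr, mul_zero]
    · simp only [Pi.smul_apply, hx a b c, smul_eq_mul, iphi, Matrix.smul_apply,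
        Finset.mul_sum]
      exact Finset.sum_congr rfl fun d _ => by ring

/-!
Contracting two indices of `χ = f φ + α ⌟ ψ + i_φ(h)` with `φ` gives
`χ_{acd} φ_{bcd} = 6 f g_{ab} + 4 α^d φ_{dab} + (4/3) h_{ab}`: the three summands are the scalar,
skew and traceless symmetric parts of one matrix, so `χ` determines `f`, `α ⌟ φ` and `h`, and a
further contraction with `φ` recovers `α`. Hence `(f, α, h) ↦ χ` is injective, and it is onto
because `1 + 7 + 27 = 35 = (7 choose 3)`.

All contractions follow from `φ_{abk} φ_{cdk} = g_{ac} g_{bd} - g_{ad} g_{bc} + ψ_{abcd}`. This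
single identity depends on the actual table of `φ` and is checked index by index.
-/

section LinearAlgebra

variable {R M N P : Type*} [Semiring R] [AddCommMonoid M] [AddCommMonoid N] [AddCommMonoid P]
  [Module R M] [Module R N] [Module R P] {f : M →ₗ[R] P} {g : N →ₗ[R] P}

theorem injective_left_of_injective_coprod (h : Function.Injective (f.coprod g)) :
    Function.Injective f := by
  rw [← LinearMap.coprod_inl f g]
  exact h.comp LinearMap.inl_injective

theorem injective_right_of_injective_coprod (h : Function.Injective (f.coprod g)) :
    Function.Injective g := by
  rw [← LinearMap.coprod_inr f g]
  exact h.comp LinearMap.inr_injective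

theorem disjoint_range_of_injective_coprod (h : Function.Injective (f.coprod g)) :
    Disjoint (LinearMap.range f) (LinearMap.range g) := by
  rw [Submodule.disjoint_def]
  rintro _ ⟨x, rfl⟩ ⟨y, hxy⟩
  have : (x, (0 : N)) = (0, y) := h (by simp [hxy])
  obtain rfl : x = 0 := (Prod.ext_iff.1 this).1
  exact map_zero f

end LinearAlgebra

section TracelessSymm

open scoped Matrix

variable (n K : Type*)

/-- The symmetric matrix whose `(a, b)` entry is the value at the unordered pair `s(a, b)`. -/
def symmMatrixOfSym2 [Semiring K] : (Sym2 n → K) →ₗ[K] Matrix n n K where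
  toFun g := Matrix.of fun a b => g s(a, b)
  map_add' _ _ := rfl
  map_smul' _ _ := rfl

@[simp]
theorem symmMatrixOfSym2_apply [Semiring K] (g : Sym2 n → K) (a b : n) :
    symmMatrixOfSym2 n K g a b = g s(a, b) :=
  rfl

theorem symmMatrixOfSym2_injective [Semiring K] : Function.Injective (symmMatrixOfSym2 n K) := by
  intro g g' h
  ext z
  induction z with
  | h a b => exact congrFun (congrFun h a) b

variable [Fintype n]

/-- The traceless symmetric `n × n` matrices. -/
def tracelessSymm [CommSemiring K] : Submodule K (Matrix n n K) where
  carrier := {h | h.IsSymm ∧ h.trace = 0}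
  add_mem' hx hy := ⟨hx.1.add hy.1, by rw [Matrix.trace_add, hx.2, hy.2, add_zero]⟩
  zero_mem' := ⟨Matrix.isSymm_zero, Matrix.trace_zero n K⟩
  smul_mem' r _ hx := ⟨hx.1.smul r, by rw [Matrix.trace_smul, hx.2, smul_zero]⟩

variable {n K} in
theorem mem_tracelessSymm_iff [CommSemiring K] {h : Matrix n n K} :
    h ∈ tracelessSymm n K ↔ (∀ a b, h a b = h b a) ∧ ∑ a, h a a = 0 :=
  and_congr_left' (Matrix.IsSymm.ext_iff.trans forall_comm)

/-- The trace of `symmMatrixOfSym2 n K g`, as a linear functional of `g`. -/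
def traceSym2 [CommSemiring K] : Module.Dual K (Sym2 n → K) :=
  Matrix.traceLinearMap n K K ∘ₗ symmMatrixOfSym2 n K

theorem traceSym2_ne_zero [CommSemiring K] [Nontrivial K] [Nonempty n] : traceSym2 n K ≠ 0 := by
  classical
  intro h
  obtain ⟨a⟩ := ‹Nonempty n›
  have := LinearMap.congr_fun h (Pi.single s(a, a) 1)
  simp [traceSym2, Matrix.trace, Pi.single_apply] at this

theorem tracelessSymm_eq_map_ker_traceSym2 [CommSemiring K] :
    tracelessSymm n K = (LinearMap.ker (traceSym2 n K)).map (symmMatrixOfSym2 n K) := by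
  ext h
  constructor
  · rintro ⟨hsymm, htrace⟩
    exact ⟨Sym2.lift ⟨fun a b => h a b, fun a b => hsymm.apply b a⟩, htrace, rfl⟩
  · rintro ⟨g, htrace, rfl⟩
    exact ⟨Matrix.IsSymm.ext fun a b => congrArg g Sym2.eq_swap, htrace⟩

theorem finrank_tracelessSymm_add_one [Field K] [Nonempty n] :
    Module.finrank K (tracelessSymm n K) + 1 = (Fintype.card n + 1).choose 2 := by
  classical
  rw [tracelessSymm_eq_map_ker_traceSym2,
    ← (Submodule.equivMapOfInjective _ (symmMatrixOfSym2_injective n K) _).finrank_eq,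
    Module.Dual.finrank_ker_add_one_of_ne_zero (traceSym2_ne_zero n K),
    Module.finrank_fintype_fun_eq_card, Sym2.card]

variable {n K} in
theorem eq_zero_of_smul_one_add_skew_add_tracelessSymm [DecidableEq n] [Nonempty n] [Field K]
    [CharZero K] {c : K} {A h : Matrix n n K} (hA : Aᵀ = -A) (hh : h ∈ tracelessSymm n K)
    (hsum : c • (1 : Matrix n n K) + A + h = 0) : c = 0 ∧ A = 0 ∧ h = 0 := by
  obtain ⟨hsymm, htrace⟩ := hh
  have hsum_transpose : c • (1 : Matrix n n K) - A + h = 0 := by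
    simpa [hA, hsymm.eq, sub_eq_add_neg] using congrArg Matrix.transpose hsum
  have hA_zero : A = 0 := by
    have htwo : (2 : K) • A = 0 := by
      linear_combination (norm := module) hsum - hsum_transpose
    exact (smul_eq_zero.1 htwo).resolve_left two_ne_zero
  have hc : c = 0 := by
    simpa [hA_zero, htrace] using congrArg Matrix.trace hsum
  refine ⟨hc, hA_zero, ?_⟩
  simpa [hc, hA_zero] using hsum

end TracelessSymm

theorem eq_zero_of_forall_lt_of_mem_Lam3 {χ : Fin 7 → Fin 7 → Fin 7 → ℝ} (hχ : χ ∈ Lam3)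
    (hzero : ∀ a b c, a < b → b < c → χ a b c = 0) : χ = 0 := by
  obtain ⟨h₁, h₂⟩ := hχ
  funext a b c
  change χ a b c = 0
  rcases lt_trichotomy a b with hab | hab | hab <;>
    rcases lt_trichotomy b c with hbc | hbc | hbc <;>
    rcases lt_trichotomy a c with hac | hac | hac <;> grind

theorem finrank_Lam3_le : Module.finrank ℝ Lam3 ≤ 35 := by
  let Increasing := {t : Fin 7 × Fin 7 × Fin 7 // t.1 < t.2.1 ∧ t.2.1 < t.2.2}
  let restrict : Lam3 →ₗ[ℝ] Increasing → ℝ :=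
    { toFun χ t := χ.1 t.1.1 t.1.2.1 t.1.2.2
      map_add' _ _ := rfl
      map_smul' _ _ := rfl }
  have restrict_injective : Function.Injective restrict := by
    refine (injective_iff_map_eq_zero restrict).2 fun χ hχ => Subtype.ext ?_
    exact eq_zero_of_forall_lt_of_mem_Lam3 χ.2 fun a b c hab hbc =>
      congrFun hχ ⟨(a, b, c), hab, hbc⟩
  have card_increasing : Fintype.card Increasing = 35 := by decide +kernel
  simpa [card_increasing] using LinearMap.finrank_le_finrank_of_injective restrict_injective

section InversionSign

variable {α : Type*} [LinearOrder α]

/-- The sign of the permutation that sorts a list, computed by counting inversions; it is `0` if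
the list has a repeated entry. Unlike `Equiv.Perm.sign`, the kernel evaluates it quickly. -/
def inversionSign : List α → ℤ
  | [] => 1
  | a :: l => (l.map fun b => if a = b then 0 else if a < b then 1 else -1).prod * inversionSign l

theorem inversionSign_ofFn {n : ℕ} (v : Fin n → α) :
    inversionSign (List.ofFn v) =
      ∏ i, ∏ j ∈ Finset.Ioi i, if v i = v j then 0 else if v i < v j then 1 else -1 := by
  induction n with
  | zero => simp [inversionSign]
  | succ n ih =>
    simp only [List.ofFn_succ, inversionSign, ih, List.map_ofFn, List.prod_ofFn,
      Fin.prod_univ_succ, Fin.prod_Ioi_zero, Fin.prod_Ioi_succ, Function.comp_apply]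

theorem inversionSign_ofFn_perm {n : ℕ} (σ : Equiv.Perm (Fin n)) :
    inversionSign (List.ofFn σ) = Equiv.Perm.sign σ := by
  rw [inversionSign_ofFn, Equiv.Perm.sign_eq_prod_prod_Ioi]
  push_cast
  refine Finset.prod_congr rfl fun i _ => Finset.prod_congr rfl fun j hj => ?_
  rw [if_neg (σ.injective.ne (Finset.mem_Ioi.1 hj).ne)]
  split_ifs <;> simp

theorem inversionSign_ofFn_eq_zero {n : ℕ} {v : Fin n → α} (hv : ¬Function.Injective v) :
    inversionSign (List.ofFn v) = 0 := by
  obtain ⟨i, j, hij, hlt⟩ : ∃ i j, v i = v j ∧ i < j := by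
    obtain ⟨i, j, hij, hne⟩ := Function.not_injective_iff.1 hv
    rcases hne.lt_or_gt with h | h
    exacts [⟨i, j, hij, h⟩, ⟨j, i, hij.symm, h⟩]
  rw [inversionSign_ofFn]
  exact Finset.prod_eq_zero (Finset.mem_univ i)
    (Finset.prod_eq_zero (Finset.mem_Ioi.2 hlt) (if_pos hij))

end InversionSign

section LeviCivita

theorem eps_eq_inversionSign (v : Fin 7 → Fin 7) : eps v = inversionSign (List.ofFn v) := by
  by_cases hv : Function.Bijective v
  · rw [eps, dif_pos hv, ← inversionSign_ofFn_perm, Equiv.coe_ofBijective]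
  · rw [eps, dif_neg hv,
      inversionSign_ofFn_eq_zero fun h => hv (Finite.injective_iff_bijective.1 h), Int.cast_zero]

theorem eps_comp_perm (v : Fin 7 → Fin 7) (σ : Equiv.Perm (Fin 7)) :
    eps (v ∘ σ) = (Equiv.Perm.sign σ : ℤ) * eps v := by
  by_cases hv : Function.Bijective v
  · have hvσ : Function.Bijective (v ∘ σ) := hv.comp σ.bijective
    have hmul : Equiv.ofBijective (v ∘ σ) hvσ = Equiv.ofBijective v hv * σ := by ext; rfl
    rw [eps, eps, dif_pos hv, dif_pos hvσ, hmul, Equiv.Perm.sign_mul, mul_comm]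
    push_cast
    rfl
  · have hvσ : ¬Function.Bijective (v ∘ σ) := by rwa [σ.bijective.of_comp_iff]
    rw [eps, eps, dif_neg hv, dif_neg hvσ, mul_zero]

theorem eps_eq_neg_of_eq_comp_swap {v w : Fin 7 → Fin 7} {i j : Fin 7} (hij : i ≠ j)
    (hw : w = v ∘ Equiv.swap i j) : eps w = -eps v := by
  simp [hw, eps_comp_perm, Equiv.Perm.sign_swap hij]

theorem eps_mem_Lam3_left (a m n p : Fin 7) :
    (fun b c d => eps ![a, b, c, d, m, n, p]) ∈ Lam3 :=
  ⟨fun b c d => eps_eq_neg_of_eq_comp_swap (i := 1) (j := 2) (by decide)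
      (by funext i; fin_cases i <;> rfl),
    fun b c d => eps_eq_neg_of_eq_comp_swap (i := 2) (j := 3) (by decide)
      (by funext i; fin_cases i <;> rfl)⟩

theorem eps_mem_Lam3_right (a b c d : Fin 7) :
    (fun m n p => eps ![a, b, c, d, m, n, p]) ∈ Lam3 :=
  ⟨fun m n p => eps_eq_neg_of_eq_comp_swap (i := 4) (j := 5) (by decide)
      (by funext i; fin_cases i <;> rfl),
    fun m n p => eps_eq_neg_of_eq_comp_swap (i := 5) (j := 6) (by decide)
      (by funext i; fin_cases i <;> rfl)⟩

end LeviCivita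

section AlternatingTensors

theorem phi_mem_Lam3 : phi ∈ Lam3 :=
  ⟨fun a b c => by unfold phi; ring, fun a b c => by unfold phi; ring⟩

theorem psi_mem_Lam3 (a : Fin 7) : psi a ∈ Lam3 := by
  have hpsi : psi a = (1 / 6 : ℝ) • ∑ m, ∑ n, ∑ p,
      phi m n p • fun b c d => eps ![a, b, c, d, m, n, p] := by
    ext b c d
    simp [psi, Finset.sum_apply, mul_comm]
  rw [hpsi]
  exact Lam3.smul_mem _ (Lam3.sum_mem fun m _ => Lam3.sum_mem fun n _ => Lam3.sum_mem fun p _ =>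
    Lam3.smul_mem _ (eps_mem_Lam3_left a m n p))

theorem iphi_mem_Lam3 (h : Matrix (Fin 7) (Fin 7) ℝ) : iphi h ∈ Lam3 := by
  obtain ⟨hswap₁, hswap₂⟩ := phi_mem_Lam3
  constructor <;> intro a b c <;>
    rw [iphi, iphi, ← mul_neg, ← Finset.sum_neg_distrib] <;>
    refine congrArg _ (Finset.sum_congr rfl fun d _ => ?_)
  · linear_combination h b d * hswap₁ d a c + h a d * hswap₁ b d c + h c d * hswap₁ a b d
  · linear_combination h a d * hswap₂ d b c + h c d * hswap₂ a d b + h b d * hswap₂ a d c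

end AlternatingTensors

section FundamentalIdentity

/-- `phi0` with integer values, so that identities between its values can be decided. -/
def phi0Int : ℕ → ℕ → ℕ → ℤ
  | 0, 1, 2 => 1
  | 0, 3, 4 => 1
  | 0, 5, 6 => 1
  | 1, 3, 5 => 1
  | 1, 4, 6 => -1
  | 2, 3, 6 => -1
  | 2, 4, 5 => -1
  | _, _, _ => 0

/-- `phi` with integer values. -/
def phiInt (a b c : Fin 7) : ℤ :=
  phi0Int a b c - phi0Int a c b + phi0Int b c a - phi0Int b a c + phi0Int c a b - phi0Int c b a

/-- `psi` with integer values. Antisymmetry cancels the factor `1 / 6` and leaves one term for each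
of the seven entries of the table `phi0`. -/
def psiInt (a b c d : Fin 7) : ℤ :=
  inversionSign [a, b, c, d, 0, 1, 2] + inversionSign [a, b, c, d, 0, 3, 4]
    + inversionSign [a, b, c, d, 0, 5, 6] + inversionSign [a, b, c, d, 1, 3, 5]
    - inversionSign [a, b, c, d, 1, 4, 6] - inversionSign [a, b, c, d, 2, 3, 6]
    - inversionSign [a, b, c, d, 2, 4, 5]

theorem phi0_eq_phi0Int (a b c : ℕ) : phi0 a b c = phi0Int a b c := by
  unfold phi0 phi0Int
  split <;> simp

theorem phi_eq_phiInt (a b c : Fin 7) : phi a b c = phiInt a b c := by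
  simp [phi, phiInt, phi0_eq_phi0Int]

theorem sum_mul_phi0 (χ : Fin 7 → Fin 7 → Fin 7 → ℝ) :
    ∑ m : Fin 7, ∑ n : Fin 7, ∑ p : Fin 7, χ m n p * phi0 m n p =
      χ 0 1 2 + χ 0 3 4 + χ 0 5 6 + χ 1 3 5 - χ 1 4 6 - χ 2 3 6 - χ 2 4 5 := by
  simp [Fin.sum_univ_seven, phi0, sub_eq_add_neg, add_assoc]

theorem sum_mul_swap_left {χ : Fin 7 → Fin 7 → Fin 7 → ℝ} (hχ : χ ∈ Lam3)
    (t : Fin 7 → Fin 7 → Fin 7 → ℝ) :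
    ∑ m, ∑ n, ∑ p, χ m n p * t n m p = -∑ m, ∑ n, ∑ p, χ m n p * t m n p := by
  rw [Finset.sum_comm]
  simp only [← Finset.sum_neg_distrib]
  refine Finset.sum_congr rfl fun m _ => Finset.sum_congr rfl fun n _ =>
    Finset.sum_congr rfl fun p _ => ?_
  rw [hχ.1, neg_mul]

theorem sum_mul_swap_right {χ : Fin 7 → Fin 7 → Fin 7 → ℝ} (hχ : χ ∈ Lam3)
    (t : Fin 7 → Fin 7 → Fin 7 → ℝ) :
    ∑ m, ∑ n, ∑ p, χ m n p * t m p n = -∑ m, ∑ n, ∑ p, χ m n p * t m n p := by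
  simp only [← Finset.sum_neg_distrib]
  refine Finset.sum_congr rfl fun m _ => ?_
  rw [Finset.sum_comm]
  refine Finset.sum_congr rfl fun n _ => Finset.sum_congr rfl fun p _ => ?_
  rw [hχ.2, neg_mul]

theorem sum_mul_phi {χ : Fin 7 → Fin 7 → Fin 7 → ℝ} (hχ : χ ∈ Lam3) :
    ∑ m, ∑ n, ∑ p, χ m n p * phi m n p =
      6 * (χ 0 1 2 + χ 0 3 4 + χ 0 5 6 + χ 1 3 5 - χ 1 4 6 - χ 2 3 6 - χ 2 4 5) := by
  have hmpn := sum_mul_swap_right hχ fun m n p => phi0 m n p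
  have hnmp := sum_mul_swap_left hχ fun m n p => phi0 m n p
  have hnpm := sum_mul_swap_left hχ fun m n p => phi0 m p n
  have hpmn := sum_mul_swap_right hχ fun m n p => phi0 n m p
  have hpnm := sum_mul_swap_left hχ fun m n p => phi0 p m n
  rw [← sum_mul_phi0]
  simp only [phi, mul_add, mul_sub, Finset.sum_add_distrib, Finset.sum_sub_distrib]
  linear_combination hnpm - 2 * hmpn + 2 * hpmn - 3 * hnmp - hpnm

theorem psi_eq_psiInt (a b c d : Fin 7) : psi a b c d = psiInt a b c d := by
  rw [psi, sum_mul_phi (eps_mem_Lam3_right a b c d)]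
  simp [psiInt, eps_eq_inversionSign]

set_option maxRecDepth 10000 in
theorem sum_phiInt_mul_phiInt : ∀ a b c d : Fin 7, ∑ k, phiInt a b k * phiInt c d k =
    (if a = c then 1 else 0) * (if b = d then 1 else 0)
      - (if a = d then 1 else 0) * (if b = c then 1 else 0) + psiInt a b c d := by
  decide +kernel

theorem sum_phi_mul_phi (a b c d : Fin 7) :
    ∑ k, phi a b k * phi c d k = gE a c * gE b d - gE a d * gE b c + psi a b c d := by
  simp only [phi_eq_phiInt, psi_eq_psiInt, gE]
  exact_mod_cast sum_phiInt_mul_phiInt a b c d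

end FundamentalIdentity

section Contractions

theorem sum_sum_mul_eq_zero_of_symm_of_skew {ι R : Type*} [Fintype ι] [Ring R] [NoZeroDivisors R]
    [CharZero R] {f g : ι → ι → R} (hf : ∀ i j, f i j = f j i) (hg : ∀ i j, g i j = -g j i) :
    ∑ i, ∑ j, f i j * g i j = 0 := by
  refine CharZero.eq_neg_self_iff.1 ?_
  calc ∑ i, ∑ j, f i j * g i j = ∑ i, ∑ j, -(f j i * g j i) := by
        refine Finset.sum_congr rfl fun i _ => Finset.sum_congr rfl fun j _ => ?_
        rw [hf i j, hg i j, mul_neg]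
    _ = -∑ j, ∑ i, f j i * g j i := by
        rw [Finset.sum_comm]
        simp only [Finset.sum_neg_distrib]

theorem sum_gE_mul (a : Fin 7) (f : Fin 7 → ℝ) : ∑ b, gE a b * f b = f a := by
  simp [gE]

theorem sum_mul_gE (a : Fin 7) (f : Fin 7 → ℝ) : ∑ b, f b * gE b a = f a := by
  simp [gE]

theorem apply_eq_zero_of_mem_Lam3 {χ : Fin 7 → Fin 7 → Fin 7 → ℝ} (hχ : χ ∈ Lam3) (a b : Fin 7) :
    χ a b a = 0 := by
  linarith [hχ.1 b a a, hχ.2 b a a]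

theorem phi_rotate (a b c : Fin 7) : phi b c a = phi a b c := by
  unfold phi
  ring

/-- The contraction `χ_{acd} φ_{bcd}` of a 3-tensor with `φ`. -/
noncomputable def contractPhi :
    (Fin 7 → Fin 7 → Fin 7 → ℝ) →ₗ[ℝ] Matrix (Fin 7) (Fin 7) ℝ where
  toFun χ := Matrix.of fun a b => ∑ c, ∑ d, χ a c d * phi b c d
  map_add' χ χ' := by
    ext
    simp [add_mul, Finset.sum_add_distrib]
  map_smul' r χ := by
    ext
    simp [Finset.mul_sum, mul_assoc]

theorem contractPhi_apply (χ : Fin 7 → Fin 7 → Fin 7 → ℝ) (a b : Fin 7) :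
    contractPhi χ a b = ∑ c, ∑ d, χ a c d * phi b c d :=
  rfl

/-- The 2-form `α ⌟ φ`, with components `α^d φ_{dab}`. -/
noncomputable def interiorPhi (α : Fin 7 → ℝ) : Matrix (Fin 7) (Fin 7) ℝ :=
  Matrix.of fun a b => ∑ d, α d * phi d a b

theorem interiorPhi_apply (α : Fin 7 → ℝ) (a b : Fin 7) :
    interiorPhi α a b = ∑ d, α d * phi d a b :=
  rfl

theorem transpose_interiorPhi (α : Fin 7 → ℝ) : (interiorPhi α).transpose = -interiorPhi α := by
  ext a b
  simp only [Matrix.transpose_apply, Matrix.neg_apply, interiorPhi_apply,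
    ← Finset.sum_neg_distrib, ← mul_neg, ← phi_mem_Lam3.2]

theorem contractPhi_phi (a b : Fin 7) : contractPhi phi a b = 6 * gE a b := by
  calc contractPhi phi a b = ∑ c, (gE a b * gE c c - gE a c * gE c b + psi a c b c) := by
        simp only [contractPhi_apply, sum_phi_mul_phi]
    _ = ∑ c, (gE a b - gE a c * gE c b) := by
        simp [apply_eq_zero_of_mem_Lam3 (psi_mem_Lam3 a), gE]
    _ = 6 * gE a b := by
        rw [Finset.sum_sub_distrib, sum_gE_mul, Finset.sum_const, Finset.card_fin]
        ring

theorem sum_interiorPhi_mul_phi (α : Fin 7 → ℝ) (b : Fin 7) :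
    ∑ c, ∑ d, interiorPhi α c d * phi b c d = 6 * α b := by
  calc _ = ∑ k, α k * contractPhi phi k b := by
        simp only [interiorPhi_apply, contractPhi_apply, Finset.sum_mul, Finset.mul_sum, mul_assoc]
        rw [eq_comm, Finset.sum_comm]
        exact Finset.sum_congr rfl fun c _ => Finset.sum_comm
    _ = 6 * α b := by
        simp only [contractPhi_phi, mul_left_comm _ (6 : ℝ), ← Finset.mul_sum, sum_mul_gE]

theorem eq_zero_of_interiorPhi_eq_zero {α : Fin 7 → ℝ} (hα : interiorPhi α = 0) : α = 0 := by
  ext b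
  simpa [hα] using sum_interiorPhi_mul_phi α b

theorem contractPhi_psi (e a b : Fin 7) : contractPhi (psi e) a b = 4 * phi e a b := by
  have hpsi (c d : Fin 7) : psi e a c d =
      interiorPhi (phi e a) c d - gE e c * gE a d + gE e d * gE a c := by
    simp only [interiorPhi_apply, ← phi_rotate _ c d, sum_phi_mul_phi]
    ring
  have hmetric : ∑ c, ∑ d, gE e c * gE a d * phi b c d = phi b e a := by
    simp only [mul_assoc, ← Finset.mul_sum, sum_gE_mul]
  have hmetric' : ∑ c, ∑ d, gE e d * gE a c * phi b c d = phi b a e := by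
    simp only [mul_assoc, mul_left_comm _ (gE a _), ← Finset.mul_sum, sum_gE_mul]
  simp only [contractPhi_apply, hpsi, add_mul, sub_mul, Finset.sum_add_distrib,
    Finset.sum_sub_distrib, sum_interiorPhi_mul_phi, hmetric, hmetric']
  linear_combination 2 * phi_rotate b e a + phi_mem_Lam3.2 b e a

theorem sum_symm_mul_phi_mul_phi {h : Matrix (Fin 7) (Fin 7) ℝ} (hsymm : h.IsSymm)
    (a b : Fin 7) :
    ∑ c, ∑ d, h c d * ∑ e, phi a d e * phi b c e = h.trace * gE a b - h a b := by
  have hpsi : ∑ c, ∑ d, h c d * psi a d b c = 0 := by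
    refine sum_sum_mul_eq_zero_of_symm_of_skew (fun c d => hsymm.apply d c) fun c d => ?_
    obtain ⟨h₁, h₂⟩ := psi_mem_Lam3 a
    rw [h₁, h₂, h₁, neg_neg]
  have htrace : ∑ c, ∑ d, h c d * (gE a b * gE d c) = h.trace * gE a b := by
    simp only [← mul_assoc, sum_mul_gE, ← Finset.sum_mul, Matrix.trace, Matrix.diag_apply]
  have happly : ∑ c, ∑ d, h c d * (gE a c * gE d b) = h a b := by
    simp only [mul_left_comm _ (gE a _), ← Finset.mul_sum, sum_mul_gE, sum_gE_mul]
  simp only [sum_phi_mul_phi, mul_add, mul_sub, Finset.sum_add_distrib, Finset.sum_sub_distrib,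
    hpsi, htrace, happly, add_zero]

theorem contractPhi_iphi {h : Matrix (Fin 7) (Fin 7) ℝ} (hsymm : h.IsSymm) (a b : Fin 7) :
    contractPhi (iphi h) a b = 4 / 3 * h a b + 2 / 3 * h.trace * gE a b := by
  have hsecond : ∑ c, ∑ e, ∑ d, h c d * phi a d e * phi b c e = h.trace * gE a b - h a b := by
    rw [← sum_symm_mul_phi_mul_phi hsymm]
    refine Finset.sum_congr rfl fun c _ => ?_
    rw [Finset.sum_comm]
    simp only [Finset.mul_sum, mul_assoc]
  have hthird : ∑ c, ∑ e, ∑ d, h e d * phi a c d * phi b c e = h.trace * gE a b - h a b := by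
    rw [← hsecond, Finset.sum_comm]
    refine Finset.sum_congr rfl fun e _ => Finset.sum_congr rfl fun c _ =>
      Finset.sum_congr rfl fun d _ => ?_
    rw [phi_mem_Lam3.2 a d c, phi_mem_Lam3.2 b e c]
    ring
  calc contractPhi (iphi h) a b
      = 1 / 3 * (∑ c, ∑ e, interiorPhi (h a) c e * phi b c e
          + ∑ c, ∑ e, ∑ d, h c d * phi a d e * phi b c e
          + ∑ c, ∑ e, ∑ d, h e d * phi a c d * phi b c e) := by
        simp only [contractPhi_apply, interiorPhi_apply, iphi, mul_assoc,
          ← Finset.mul_sum, Finset.sum_mul, add_mul, Finset.sum_add_distrib]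
    _ = 4 / 3 * h a b + 2 / 3 * h.trace * gE a b := by
        rw [sum_interiorPhi_mul_phi, hsecond, hthird]
        ring

end Contractions

section Decomposition

/-- The linear map `h ↦ i_φ(h)` on traceless symmetric 2-tensors. -/
noncomputable def iphiTraceless :
    tracelessSymm (Fin 7) ℝ →ₗ[ℝ] Fin 7 → Fin 7 → Fin 7 → ℝ where
  toFun h := iphi h
  map_add' h k := by
    ext a b c
    simp only [iphi, Submodule.coe_add, Matrix.add_apply, Pi.add_apply, ← mul_add,
      ← Finset.sum_add_distrib]
    exact congrArg _ (Finset.sum_congr rfl fun d _ => by ring)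
  map_smul' r h := by
    ext a b c
    simp only [iphi, Submodule.coe_smul, Matrix.smul_apply, Pi.smul_apply, smul_eq_mul,
      Finset.mul_sum, RingHom.id_apply]
    exact Finset.sum_congr rfl fun d _ => by ring

/-- The map `(f, α, h) ↦ f φ + α ⌟ ψ + i_φ(h)`. -/
noncomputable def lam3Map :
    ℝ × (Fin 7 → ℝ) × tracelessSymm (Fin 7) ℝ →ₗ[ℝ] Fin 7 → Fin 7 → Fin 7 → ℝ :=
  (LinearMap.toSpanSingleton ℝ _ phi).coprod
    ((Fintype.linearCombination ℝ psi).coprod iphiTraceless)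

theorem lam3Map_eq (t : ℝ × (Fin 7 → ℝ) × tracelessSymm (Fin 7) ℝ) :
    lam3Map t = t.1 • phi + (∑ d, t.2.1 d • psi d + iphi t.2.2) :=
  rfl

theorem lam3Map_apply (t : ℝ × (Fin 7 → ℝ) × tracelessSymm (Fin 7) ℝ) (a b c : Fin 7) :
    lam3Map t a b c = t.1 * phi a b c + ∑ d, t.2.1 d * psi d a b c + iphi t.2.2 a b c := by
  simp [lam3Map_eq, Finset.sum_apply, add_assoc]

theorem contractPhi_lam3Map (t : ℝ × (Fin 7 → ℝ) × tracelessSymm (Fin 7) ℝ) :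
    contractPhi (lam3Map t) =
      (6 * t.1) • 1 + (4 : ℝ) • interiorPhi t.2.1 + (4 / 3 : ℝ) • t.2.2.1 := by
  obtain ⟨f, α, h, hsymm, htrace⟩ := t
  ext a b
  simp only [lam3Map_eq, map_add, map_smul, map_sum, Matrix.add_apply, Matrix.smul_apply,
    Matrix.sum_apply, smul_eq_mul, contractPhi_phi, contractPhi_psi, contractPhi_iphi hsymm,
    htrace, mul_left_comm _ (4 : ℝ), ← Finset.mul_sum, interiorPhi_apply,
    Matrix.one_apply, gE]
  ring

theorem lam3Map_injective : Function.Injective lam3Map := by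
  refine (injective_iff_map_eq_zero lam3Map).2 fun ⟨f, α, h⟩ hzero => ?_
  have hcontract : (6 * f) • 1 + (4 : ℝ) • interiorPhi α + (4 / 3 : ℝ) • h.1 = 0 := by
    rw [← contractPhi_lam3Map (f, α, h), hzero, map_zero]
  obtain ⟨hf, hα, hh⟩ := eq_zero_of_smul_one_add_skew_add_tracelessSymm
    (by rw [Matrix.transpose_smul, transpose_interiorPhi, smul_neg])
    (Submodule.smul_mem _ _ h.2) hcontract
  have hf : f = 0 := by simpa using hf
  have hα : α = 0 := eq_zero_of_interiorPhi_eq_zero (by simpa using hα)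
  have hh : h = 0 := by simpa using hh
  rw [hf, hα, hh]
  rfl

theorem lam3Map_mem_Lam3 (t : ℝ × (Fin 7 → ℝ) × tracelessSymm (Fin 7) ℝ) :
    lam3Map t ∈ Lam3 := by
  rw [lam3Map_eq]
  exact Lam3.add_mem (Lam3.smul_mem _ phi_mem_Lam3) (Lam3.add_mem
    (Lam3.sum_mem fun d _ => Lam3.smul_mem _ (psi_mem_Lam3 d)) (iphi_mem_Lam3 _))

theorem finrank_tracelessSymm_fin_seven : Module.finrank ℝ (tracelessSymm (Fin 7) ℝ) = 27 :=
  Nat.succ_injective (finrank_tracelessSymm_add_one (Fin 7) ℝ)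

theorem range_lam3Map : LinearMap.range lam3Map = Lam3 := by
  refine Submodule.eq_of_le_of_finrank_le ?_ (finrank_Lam3_le.trans ?_)
  · rintro _ ⟨t, rfl⟩
    exact lam3Map_mem_Lam3 t
  · rw [LinearMap.finrank_range_of_inj lam3Map_injective]
    simp [finrank_tracelessSymm_fin_seven]

theorem range_toSpanSingleton_phi :
    LinearMap.range (LinearMap.toSpanSingleton ℝ _ phi) = Lam3_1 := by
  ext χ
  refine exists_congr fun f => eq_comm.trans ?_
  simp only [funext_iff]
  rfl

theorem range_linearCombination_psi :
    LinearMap.range (Fintype.linearCombination ℝ psi) = Lam3_7 := by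
  ext χ
  refine exists_congr fun α => eq_comm.trans ?_
  simp [funext_iff, Fintype.linearCombination_apply, Finset.sum_apply]

theorem range_iphiTraceless : LinearMap.range iphiTraceless = Lam3_27 := by
  ext χ
  constructor
  · rintro ⟨⟨h, hh⟩, rfl⟩
    obtain ⟨hsymm, htrace⟩ := mem_tracelessSymm_iff.1 hh
    exact ⟨h, hsymm, htrace, fun _ _ _ => rfl⟩
  · rintro ⟨h, hsymm, htrace, hχ⟩
    exact ⟨⟨h, mem_tracelessSymm_iff.2 ⟨hsymm, htrace⟩⟩, by ext a b c; exact (hχ a b c).symm⟩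

theorem existsUnique_phi_add_psi_add_iphi {χ : Fin 7 → Fin 7 → Fin 7 → ℝ} (hχ : χ ∈ Lam3) :
    ∃! t : ℝ × (Fin 7 → ℝ) × Matrix (Fin 7) (Fin 7) ℝ,
      (∀ a b, t.2.2 a b = t.2.2 b a) ∧ (∑ a : Fin 7, t.2.2 a a = 0) ∧
      (∀ a b c, χ a b c = t.1 * phi a b c + (∑ d : Fin 7, t.2.1 d * psi d a b c)
        + iphi t.2.2 a b c) := by
  obtain ⟨⟨f, α, h, hh⟩, rfl⟩ : χ ∈ LinearMap.range lam3Map := range_lam3Map ▸ hχ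
  obtain ⟨hsymm, htrace⟩ := mem_tracelessSymm_iff.1 hh
  refine ⟨(f, α, h), ⟨hsymm, htrace, lam3Map_apply _⟩, ?_⟩
  rintro ⟨f', α', h'⟩ ⟨hsymm', htrace', heq⟩
  have hlam3Map : lam3Map (f', α', ⟨h', mem_tracelessSymm_iff.2 ⟨hsymm', htrace'⟩⟩) =
      lam3Map (f, α, ⟨h, hh⟩) := by
    ext a b c
    rw [heq, lam3Map_apply]
  exact congrArg (fun t => (t.1, t.2.1, t.2.2.1)) (lam3Map_injective hlam3Map)

theorem Lam3_1_sup_Lam3_7_sup_Lam3_27 : Lam3_1 ⊔ Lam3_7 ⊔ Lam3_27 = Lam3 := by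
  rw [← range_lam3Map, lam3Map, LinearMap.range_coprod, LinearMap.range_coprod,
    range_toSpanSingleton_phi, range_linearCombination_psi, range_iphiTraceless, sup_assoc]

theorem disjoint_Lam3_1_sup_Lam3_7_Lam3_27 : Disjoint Lam3_1 (Lam3_7 ⊔ Lam3_27) := by
  rw [← range_toSpanSingleton_phi, ← range_linearCombination_psi, ← range_iphiTraceless,
    ← LinearMap.range_coprod]
  exact disjoint_range_of_injective_coprod lam3Map_injective

theorem disjoint_Lam3_7_Lam3_27 : Disjoint Lam3_7 Lam3_27 := by
  rw [← range_linearCombination_psi, ← range_iphiTraceless]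
  exact disjoint_range_of_injective_coprod
    (injective_right_of_injective_coprod lam3Map_injective)

theorem finrank_Lam3_1 : Module.finrank ℝ Lam3_1 = 1 := by
  rw [← range_toSpanSingleton_phi, LinearMap.finrank_range_of_inj
    (injective_left_of_injective_coprod lam3Map_injective), Module.finrank_self]

theorem finrank_Lam3_7 : Module.finrank ℝ Lam3_7 = 7 := by
  rw [← range_linearCombination_psi, LinearMap.finrank_range_of_inj
    (injective_left_of_injective_coprod (injective_right_of_injective_coprod lam3Map_injective)),
    Module.finrank_fin_fun]

theorem finrank_Lam3_27 : Module.finrank ℝ Lam3_27 = 27 := by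
  rw [← range_iphiTraceless, LinearMap.finrank_range_of_inj
    (injective_right_of_injective_coprod (injective_right_of_injective_coprod lam3Map_injective)),
    finrank_tracelessSymm_fin_seven]

end Decomposition

/-- Every alternating 3-tensor `χ` on `ℝ⁷` decomposes uniquely as
`χ = f φ + α ⌟ ψ + i_φ(h)` with `f ∈ ℝ`, `α ∈ ℝ⁷` and `h` traceless symmetric;
consequently `Λ³ = Λ³₁ ⊕ Λ³₇ ⊕ Λ³₂₇`, of dimensions `1`, `7`, `27`. -/
theorem lam3_decomposition :
    (∀ χ : Fin 7 → Fin 7 → Fin 7 → ℝ,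
      (∀ a b c, χ b a c = -χ a b c) → (∀ a b c, χ a c b = -χ a b c) →
      ∃! t : ℝ × (Fin 7 → ℝ) × Matrix (Fin 7) (Fin 7) ℝ,
        (∀ a b, t.2.2 a b = t.2.2 b a) ∧ (∑ a : Fin 7, t.2.2 a a = 0) ∧
        (∀ a b c, χ a b c = t.1 * phi a b c + (∑ d : Fin 7, t.2.1 d * psi d a b c)
          + iphi t.2.2 a b c)) ∧
    Lam3_1 ⊔ Lam3_7 ⊔ Lam3_27 = Lam3 ∧
    Lam3_1 ⊓ Lam3_7 = ⊥ ∧ Lam3_1 ⊓ Lam3_27 = ⊥ ∧ Lam3_7 ⊓ Lam3_27 = ⊥ ∧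
    Module.finrank ℝ Lam3_1 = 1 ∧ Module.finrank ℝ Lam3_7 = 7 ∧
    Module.finrank ℝ Lam3_27 = 27 := by
  exact ⟨fun χ hswap₁ hswap₂ => existsUnique_phi_add_psi_add_iphi ⟨hswap₁, hswap₂⟩,
    Lam3_1_sup_Lam3_7_sup_Lam3_27,
    (disjoint_Lam3_1_sup_Lam3_7_Lam3_27.mono_right le_sup_left).eq_bot,
    (disjoint_Lam3_1_sup_Lam3_7_Lam3_27.mono_right le_sup_right).eq_bot,
    disjoint_Lam3_7_Lam3_27.eq_bot,
    finrank_Lam3_1, finrank_Lam3_7, finrank_Lam3_27⟩
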